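/- Let P = u,w₁,…,w_{2k−1},v be a path on 2k+1 vertices with k ≥ 1 and let L be an m-assignment for P with L(u) = L(v) = {1,…,m}. For c ∈ L(u) and d ∈ L(v), let N(c,d) be the number of proper L-colorings of P that color u with c and v with d. Then Σ_{j=1}^m N(j,j) ≥ (m−1)^{2k} + (m−1). -/

import Mathlib

/-!
Identifying the two ends of the path, the sum counts the list colorings of a cycle of length
`n = 2k`. Enumerate every list increasingly by `Fin m`; then the sum is at least (in fact equals)
the trace of a product `M₀ ⋯ Mₙ₋₁` of transfer matrices, where `Mᵢ = J - Aᵢ`, `J` is the all-ones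
matrix and the 0/1 matrix `Aᵢ` records the colors common to the lists `i` and `i + 1`. Since `Aᵢ`
is a partial permutation matrix, `Mᵢ ≥ J - P` entrywise for some permutation matrix `P`, and a
product of `p` such matrices is at least `b J + (-1)ᵖ P'` with `m b = (m-1)ᵖ - (-1)ᵖ`
(`run_lower`).

* If all lists agree, every `Mᵢ` is `J - 1`, and the trace is `(m-1)ⁿ + (m-1)`.
* If two consecutive lists `i`, `i + 1` differ, some row of `Mᵢ` is all ones, so the entries of
  `Mᵢ` sum to at least `m(m-1) + 1`. The trace is cyclic, so it equals `tr (Z Mᵢ)` with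
  `Z ≥ b J - P'` a product of `n - 1` matrices; hence it is at least `b (m(m-1) + 1) - m`, which
  is at least `b m (m-1) = (m-1)ⁿ + (m-1)` as soon as `b ≥ m`. This holds if `m ≥ 3` and `n ≥ 4`
  (`trace_lower_of_three_le`).
* For `n = 2` one has `M₁ = M₀ᵀ`, and the trace is the sum of the entries of `M₀`.
* For `m = 2` a second consecutive pair of lists must differ, because the lists are arranged
  cyclically. Thus both `Z` and `Mᵢ` have at most one entry that is not positive, and the trace is
  at least `2` (`trace_lower_two`).
-/

/-- `N(c,d)` for a path: the number of proper `L`-colorings of the path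
`x_0, x_1, …, x_n` (on `n+1` vertices, with consecutive vertices adjacent)
that color `x_0` with `c` and `x_n` with `d`.  A proper `L`-coloring assigns each vertex a
color from its list so that adjacent vertices get different colors. -/
noncomputable def pathCount (n : ℕ) (L : Fin (n+1) → Finset ℕ) (c d : ℕ) : ℕ :=
  Nat.card {f : Fin (n+1) → ℕ // (∀ v, f v ∈ L v) ∧
    (∀ i : Fin n, f i.castSucc ≠ f i.succ) ∧ f 0 = c ∧ f (Fin.last n) = d}

/-! ### Products of transfer matrices -/

/-- The common off-diagonal entry `((m-1)^p - (-1)^p) / m` of the power `(J - 1)^p` of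
`m × m` matrices, `J` being the all-ones matrix. -/
def offDiag (m : ℤ) : ℕ → ℤ
  | 0 => 0
  | p + 1 => (m - 1) * offDiag m p + (-1) ^ p

lemma mul_offDiag (m : ℤ) (p : ℕ) : m * offDiag m p = (m - 1) ^ p - (-1) ^ p := by
  induction p with
  | zero => simp [offDiag]
  | succ p ih =>
    simp only [offDiag, pow_succ]
    linear_combination (m - 1) * ih

lemma offDiag_even_odd (m : ℤ) (hm : 2 ≤ m) (k : ℕ) :
    0 ≤ offDiag m (2 * k) ∧ 1 ≤ offDiag m (2 * k + 1) := by
  induction k with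
  | zero => simp [offDiag]
  | succ k ih =>
    have h1 : offDiag m (2 * (k + 1)) = (m - 1) * offDiag m (2 * k + 1) - 1 := by
      rw [show 2 * (k + 1) = (2 * k + 1) + 1 by ring, offDiag]
      have : (-1 : ℤ) ^ (2 * k + 1) = -1 := by simp [pow_succ, pow_mul]
      rw [this]
      ring
    have h2 : offDiag m (2 * (k + 1) + 1) = (m - 1) * offDiag m (2 * (k + 1)) + 1 := by
      rw [offDiag]
      simp [pow_mul]
    have h3 : 0 ≤ offDiag m (2 * (k + 1)) := by nlinarith [ih.2]
    exact ⟨h3, by nlinarith⟩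

lemma le_offDiag_odd (m : ℤ) (hm : 3 ≤ m) (k : ℕ) : m ≤ offDiag m (2 * k + 3) := by
  induction k with
  | zero =>
    simp only [offDiag]
    nlinarith
  | succ k ih =>
    have h2 : offDiag m (2 * (k + 1) + 3) =
        (m - 1) * ((m - 1) * offDiag m (2 * k + 3) - 1) + 1 := by
      have h0 : (-1 : ℤ) ^ (2 * k + 3) = -1 := by simp [pow_succ, pow_mul]
      have h1 : (-1 : ℤ) ^ (2 * k + 3 + 1) = 1 := by simp [pow_succ, pow_mul]
      rw [show 2 * (k + 1) + 3 = (2 * k + 3) + 1 + 1 by ring, offDiag, offDiag, h0, h1]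
      ring
    rw [h2]
    nlinarith [mul_nonneg (sub_nonneg.2 hm) (sub_nonneg.2 ih),
      mul_nonneg (mul_nonneg (sub_nonneg.2 hm) (sub_nonneg.2 hm)) (sub_nonneg.2 ih)]

lemma offDiag_add_nonneg (m : ℤ) (hm : 2 ≤ m) (p : ℕ) :
    0 ≤ offDiag m p ∧ 0 ≤ offDiag m p + (-1) ^ p := by
  rcases Nat.even_or_odd' p with ⟨k, rfl | rfl⟩
  · have := (offDiag_even_odd m hm k).1
    simp [pow_mul]
    omega
  · have := (offDiag_even_odd m hm k).2
    simp [pow_succ, pow_mul]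
    omega

/-- `M` is entrywise nonnegative and at least `J - P`, where `P` is the permutation matrix of some
member of `H`. -/
def IsTransfer {m : ℕ} (H : Subgroup (Equiv.Perm (Fin m))) (M : Matrix (Fin m) (Fin m) ℤ) : Prop :=
  (∀ e c, 0 ≤ M e c) ∧ ∃ π ∈ H, ∀ e c, (1 : ℤ) - (if π e = c then 1 else 0) ≤ M e c

/-- Entrywise monotonicity of the exact identity
`∏ (J - Pᵢ) = offDiag m p • J + (-1)^p • ∏ Pᵢ` for permutation matrices `Pᵢ`. -/
lemma run_lower {m : ℕ} (hm : 2 ≤ m) (H : Subgroup (Equiv.Perm (Fin m)))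
    (l : List (Matrix (Fin m) (Fin m) ℤ)) (hl : ∀ M ∈ l, IsTransfer H M) :
    ∃ σ ∈ H, ∀ a c, offDiag m l.length + (-1) ^ l.length * (if σ a = c then 1 else 0)
      ≤ l.prod a c := by
  induction l with
  | nil =>
    refine ⟨1, H.one_mem, fun a c => le_of_eq ?_⟩
    rw [List.prod_nil, Matrix.one_apply]
    by_cases h : a = c
    · rw [if_pos h, if_pos (show (1 : Equiv.Perm (Fin m)) a = c from h)]
      simp [offDiag]
    · rw [if_neg h, if_neg (show ¬ (1 : Equiv.Perm (Fin m)) a = c from h)]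
      simp [offDiag]
  | cons M l ih =>
    obtain ⟨σ, hσ, hZ⟩ := ih fun M hM => hl M (List.mem_cons_of_mem _ hM)
    obtain ⟨hM0, π, hπ, hM⟩ := hl M List.mem_cons_self
    refine ⟨σ * π, H.mul_mem hσ hπ, fun a c => ?_⟩
    obtain ⟨hb0, hb1⟩ := offDiag_add_nonneg (m : ℤ) (by exact_mod_cast hm) l.length
    set b := offDiag m l.length with hb
    set s : ℤ := (-1) ^ l.length with hs
    have hnn : ∀ e, 0 ≤ b + s * (if σ e = c then 1 else 0) := by
      intro e
      split_ifs <;> simp <;> assumption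
    have key : ∑ e, ((1 : ℤ) - (if π a = e then 1 else 0)) * (b + s * (if σ e = c then 1 else 0))
        = offDiag m (l.length + 1) + (-1) ^ (l.length + 1) * (if σ (π a) = c then 1 else 0) := by
      have h1 : ∑ e, s * (if σ e = c then (1 : ℤ) else 0) = s := by
        rw [← Finset.mul_sum, Equiv.sum_comp σ (fun e => if e = c then (1 : ℤ) else 0)]
        simp
      simp only [sub_mul, one_mul, ite_mul, zero_mul, Finset.sum_sub_distrib,
        Finset.sum_add_distrib, h1, Finset.sum_ite_eq, Finset.mem_univ, if_true,
        Finset.sum_const, Finset.card_univ, Fintype.card_fin, nsmul_eq_mul, offDiag, pow_succ]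
      rw [← hb, ← hs]
      ring
    rw [List.length_cons, List.prod_cons, Matrix.mul_apply, Equiv.Perm.mul_apply, ← key]
    refine Finset.sum_le_sum fun e _ => ?_
    exact (mul_le_mul_of_nonneg_right (hM a e) (hnn e)).trans
      (mul_le_mul_of_nonneg_left (hZ e c) (hM0 a e))

lemma IsTransfer.row_sum {m : ℕ} {H : Subgroup (Equiv.Perm (Fin m))}
    {M : Matrix (Fin m) (Fin m) ℤ} (h : IsTransfer H M) (e : Fin m) :
    (m : ℤ) - 1 ≤ ∑ c, M e c := by
  obtain ⟨-, π, -, hM⟩ := h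
  calc (m : ℤ) - 1 = ∑ c, ((1 : ℤ) - (if π e = c then 1 else 0)) := by simp
    _ ≤ _ := Finset.sum_le_sum fun c _ => hM e c

/-- The trace bound for `m ≥ 3` and `2k + 4` factors, one of which, `M`, has a row of ones:
the extra unit in the sum of its entries, weighted by `offDiag m (2k + 3) ≥ m`, makes up for
the permutation subtracted in the bound for the other factors. -/
lemma trace_lower_of_three_le {m : ℕ} (hm : 3 ≤ m) (k : ℕ)
    (l : List (Matrix (Fin m) (Fin m) ℤ)) (hl : ∀ M ∈ l, IsTransfer ⊤ M)
    (hlen : l.length = 2 * k + 3) (M : Matrix (Fin m) (Fin m) ℤ) (hM : IsTransfer ⊤ M)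
    (hM1 : ∀ e c, M e c ≤ 1) (e₀ : Fin m) (he₀ : ∀ c, M e₀ c = 1) :
    ((m : ℤ) - 1) ^ (2 * k + 4) + (m - 1) ≤ (l.prod * M).trace := by
  obtain ⟨σ, -, hZ⟩ := run_lower (by omega) ⊤ l hl
  rw [hlen] at hZ
  have hs : (-1 : ℤ) ^ (2 * k + 3) = -1 := by simp [pow_succ, pow_mul]
  have hmb := mul_offDiag (m : ℤ) (2 * k + 3)
  have hbm := le_offDiag_odd (m : ℤ) (by exact_mod_cast hm) k
  rw [hs] at hZ hmb
  set b := offDiag m (2 * k + 3)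
  have hsum : (m : ℤ) * (m - 1) + 1 ≤ ∑ e, ∑ c, M e c := by
    have h0 : ∑ e, ((m : ℤ) - 1 + if e = e₀ then 1 else 0) ≤ ∑ e, ∑ c, M e c := by
      refine Finset.sum_le_sum fun e _ => ?_
      split_ifs with h
      · subst h
        simp [he₀]
      · simpa using hM.row_sum e
    have h1 : ∑ e : Fin m, ((m : ℤ) - 1 + if e = e₀ then 1 else 0) = m * (m - 1) + 1 := by
      simp [Finset.sum_add_distrib]
      ring
    rwa [h1] at h0
  have h1 : b * (∑ e, ∑ c, M e c) - m ≤ (l.prod * M).trace := by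
    have h2 : ∑ a, ∑ e, (b + -1 * (if σ a = e then 1 else 0)) * M e a ≤ (l.prod * M).trace := by
      simp only [Matrix.trace, Matrix.diag, Matrix.mul_apply]
      exact Finset.sum_le_sum fun a _ => Finset.sum_le_sum fun e _ =>
        mul_le_mul_of_nonneg_right (hZ a e) (hM.1 e a)
    have h3 : ∑ a, M (σ a) a ≤ (m : ℤ) := by
      calc ∑ a, M (σ a) a ≤ ∑ _a : Fin m, (1 : ℤ) := Finset.sum_le_sum fun a _ => hM1 _ _
        _ = m := by simp
    refine le_trans ?_ h2
    simp only [add_mul, Finset.sum_add_distrib, neg_mul, one_mul, ite_mul, zero_mul,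
      Finset.sum_neg_distrib, Finset.sum_ite_eq, Finset.mem_univ, if_true, ← Finset.mul_sum]
    rw [Finset.sum_comm]
    linarith
  have h4 : ((m : ℤ) - 1) ^ (2 * k + 4) + (m - 1) = b * (m * (m - 1)) := by
    rw [pow_succ]
    linear_combination (-(m : ℤ) + 1) * hmb
  rw [h4]
  have hb0 : 0 ≤ b := by
    have : (0 : ℤ) ≤ m := by positivity
    linarith
  nlinarith [mul_le_mul_of_nonneg_left hsum hb0]

/-! ### Lists of size two -/

/-- All entries of `M` except possibly one are positive. -/
def AlmostPos (M : Matrix (Fin 2) (Fin 2) ℤ) : Prop :=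
  ∃ e₀ c₀, ∀ e c, (e ≠ e₀ ∨ c ≠ c₀) → 1 ≤ M e c

/-- `M` dominates a permutation matrix. -/
def HasPerm (M : Matrix (Fin 2) (Fin 2) ℤ) : Prop :=
  (∀ e c, 0 ≤ M e c) ∧ ∃ π : Equiv.Perm (Fin 2), ∀ e, 1 ≤ M e (π e)

lemma one_le_mul_apply {A B : Matrix (Fin 2) (Fin 2) ℤ} (hA : ∀ e c, 0 ≤ A e c)
    (hB : ∀ e c, 0 ≤ B e c) (a e c : Fin 2) (h1 : 1 ≤ A a e) (h2 : 1 ≤ B e c) :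
    1 ≤ (A * B) a c := by
  rw [Matrix.mul_apply]
  refine le_trans ?_ (Finset.single_le_sum (f := fun e => A a e * B e c)
    (fun i _ => mul_nonneg (hA a i) (hB i c)) (Finset.mem_univ e))
  exact one_le_mul_of_one_le_of_one_le h1 h2

lemma hasPerm_of_isTransfer {M : Matrix (Fin 2) (Fin 2) ℤ} (h : IsTransfer ⊤ M) : HasPerm M := by
  obtain ⟨h0, π, -, hM⟩ := h
  refine ⟨h0, π.trans (Equiv.swap 0 1), fun e => ?_⟩
  have hne : π e ≠ Equiv.swap 0 1 (π e) := by
    generalize π e = x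
    revert x
    decide
  simpa [hne] using hM e (Equiv.swap 0 1 (π e))

lemma almostPos_of_isTransfer {M : Matrix (Fin 2) (Fin 2) ℤ} (h : IsTransfer ⊤ M) (e₀ : Fin 2)
    (he₀ : ∀ c, M e₀ c = 1) : AlmostPos M := by
  obtain ⟨h0, π, -, hM⟩ := h
  refine ⟨Equiv.swap 0 1 e₀, π (Equiv.swap 0 1 e₀), fun e c hec => ?_⟩
  by_cases he : e = e₀
  · rw [he, he₀]
  · have : e = Equiv.swap 0 1 e₀ := by
      clear hec he₀
      revert e e₀
      decide
    subst this
    have hc : π (Equiv.swap 0 1 e₀) ≠ c := by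
      rcases hec with h | h
      · exact absurd rfl h
      · exact fun h' => h h'.symm
    simpa [hc] using hM (Equiv.swap 0 1 e₀) c

lemma HasPerm.mul {A B : Matrix (Fin 2) (Fin 2) ℤ} (hA : HasPerm A) (hB : HasPerm B) :
    HasPerm (A * B) := by
  obtain ⟨hA0, π, hA⟩ := hA
  obtain ⟨hB0, σ, hB⟩ := hB
  refine ⟨fun e c => ?_, π.trans σ, fun e => one_le_mul_apply hA0 hB0 e (π e) _ (hA e) (hB _)⟩
  rw [Matrix.mul_apply]
  exact Finset.sum_nonneg fun i _ => mul_nonneg (hA0 _ _) (hB0 _ _)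

lemma AlmostPos.mul_hasPerm {A B : Matrix (Fin 2) (Fin 2) ℤ} (hA0 : ∀ e c, 0 ≤ A e c)
    (hA : AlmostPos A) (hB : HasPerm B) : AlmostPos (A * B) := by
  obtain ⟨e₀, c₀, hA⟩ := hA
  obtain ⟨hB0, σ, hB⟩ := hB
  refine ⟨e₀, σ c₀, fun e c hec => one_le_mul_apply hA0 hB0 e (σ.symm c) c (hA _ _ ?_) ?_⟩
  · refine hec.imp id fun h h' => h ?_
    rw [← h', Equiv.apply_symm_apply]
  · simpa using hB (σ.symm c)

lemma HasPerm.mul_almostPos {A B : Matrix (Fin 2) (Fin 2) ℤ} (hA : HasPerm A)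
    (hB0 : ∀ e c, 0 ≤ B e c) (hB : AlmostPos B) : AlmostPos (A * B) := by
  obtain ⟨e₀, c₀, hB⟩ := hB
  obtain ⟨hA0, σ, hA⟩ := hA
  refine ⟨σ.symm e₀, c₀, fun e c hec => one_le_mul_apply hA0 hB0 e (σ e) c (hA _) (hB _ _ ?_)⟩
  refine hec.imp (fun h h' => h ?_) id
  rw [← h', Equiv.symm_apply_apply]

lemma hasPerm_prod (l : List (Matrix (Fin 2) (Fin 2) ℤ)) (hl : ∀ M ∈ l, HasPerm M) :
    HasPerm l.prod := by
  induction l with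
  | nil =>
    refine ⟨fun e c => ?_, 1, fun e => by simp⟩
    rw [List.prod_nil, Matrix.one_apply]
    split_ifs <;> simp
  | cons M l ih =>
    rw [List.prod_cons]
    exact (hl M List.mem_cons_self).mul (ih fun M hM => hl M (List.mem_cons_of_mem _ hM))

lemma almostPos_prod (l : List (Matrix (Fin 2) (Fin 2) ℤ)) (hl : ∀ M ∈ l, HasPerm M)
    (M : Matrix (Fin 2) (Fin 2) ℤ) (hM : M ∈ l) (hMp : AlmostPos M) : AlmostPos l.prod := by
  obtain ⟨s, t, rfl⟩ := List.append_of_mem hM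
  have hs := hasPerm_prod s fun N hN => hl N (by simp [hN])
  have ht := hasPerm_prod t fun N hN => hl N (by simp [hN])
  have hM' := hl M hM
  rw [List.prod_append, List.prod_cons]
  exact hs.mul_almostPos (hM'.mul ht).1 (AlmostPos.mul_hasPerm hM'.1 hMp ht)

lemma trace_lower_two {A B : Matrix (Fin 2) (Fin 2) ℤ} (hA0 : ∀ e c, 0 ≤ A e c)
    (hB0 : ∀ e c, 0 ≤ B e c) (hA : AlmostPos A) (hB : AlmostPos B) : 2 ≤ (A * B).trace := by
  obtain ⟨e₀, c₀, hA⟩ := hA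
  obtain ⟨e₁, c₁, hB⟩ := hB
  have h : ∀ a e, (1 : ℤ) - (if a = e₀ ∧ e = c₀ then 1 else 0) - (if e = e₁ ∧ a = c₁ then 1 else 0)
      ≤ A a e * B e a := by
    intro a e
    have h0 := mul_nonneg (hA0 a e) (hB0 e a)
    by_cases h1 : a = e₀ ∧ e = c₀
    · rw [if_pos h1]
      split_ifs <;> linarith
    · by_cases h2 : e = e₁ ∧ a = c₁
      · rw [if_pos h2, if_neg h1]
        linarith
      · rw [if_neg h1, if_neg h2]
        have := one_le_mul_of_one_le_of_one_le (hA a e (by tauto)) (hB e a (by tauto))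
        linarith
  have h2 : ∑ a, ∑ e, ((1 : ℤ) - (if a = e₀ ∧ e = c₀ then 1 else 0)
      - (if e = e₁ ∧ a = c₁ then 1 else 0)) = 2 := by
    clear hA hB h
    revert e₀ c₀ e₁ c₁
    decide
  rw [← h2]
  simp only [Matrix.trace, Matrix.diag, Matrix.mul_apply]
  exact Finset.sum_le_sum fun a _ => Finset.sum_le_sum fun e _ => h a e

/-! ### The transfer matrices of a list assignment -/

section Lists

variable {m : ℕ} (L : ℕ → Finset ℕ) (hL : ∀ i, (L i).card = m)

/-- The transfer matrix between the lists `L i` and `L (i + 1)`, both enumerated increasingly: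
an entry is `1` if the two colors differ and `0` if they agree. -/
def transfer (i : ℕ) : Matrix (Fin m) (Fin m) ℤ := fun e c =>
  if (L i).orderEmbOfFin (hL i) e = (L (i + 1)).orderEmbOfFin (hL (i + 1)) c then 0 else 1

lemma transfer_nonneg (i : ℕ) (e c : Fin m) : 0 ≤ transfer L hL i e c := by
  unfold transfer
  split_ifs <;> simp

lemma transfer_le_one (i : ℕ) (e c : Fin m) : transfer L hL i e c ≤ 1 := by
  unfold transfer
  split_ifs <;> simp

/-- The partial matching of common colors extends to a permutation. -/
lemma transfer_isTransfer (i : ℕ) : IsTransfer ⊤ (transfer L hL i) := by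
  refine ⟨transfer_nonneg L hL i, ?_⟩
  obtain ⟨g, hg⟩ := Finset.exists_equiv_extend_of_card_eq (α := Fin m) (t := L (i + 1))
    (by simp [hL])
    (s := Finset.univ.filter fun e => (L i).orderEmbOfFin (hL i) e ∈ L (i + 1))
    (f := (L i).orderEmbOfFin (hL i))
    (by
      intro x hx
      simp only [Finset.mem_image, Finset.mem_filter, Finset.mem_univ, true_and] at hx
      obtain ⟨e, he, rfl⟩ := hx
      exact he)
    (fun a _ b _ h => ((L i).orderEmbOfFin (hL i)).injective h)
  refine ⟨g.trans ((L (i + 1)).orderIsoOfFin (hL (i + 1))).symm.toEquiv, Subgroup.mem_top _,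
    fun e c => ?_⟩
  unfold transfer
  by_cases h : (L i).orderEmbOfFin (hL i) e = (L (i + 1)).orderEmbOfFin (hL (i + 1)) c
  · have hmem : (L i).orderEmbOfFin (hL i) e ∈ L (i + 1) := by
      rw [h]
      exact Finset.orderEmbOfFin_mem _ _ _
    have hge := hg e (by simpa using hmem)
    have : g e = (L (i + 1)).orderIsoOfFin (hL (i + 1)) c := by
      apply Subtype.ext
      rw [hge, h]
      rfl
    rw [if_pos h, if_pos (by simp [this])]
    simp
  · rw [if_neg h]
    split_ifs <;> simp

lemma transfer_isTransfer_bot (i : ℕ) (h : L i = L (i + 1)) :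
    IsTransfer ⊥ (transfer L hL i) := by
  refine ⟨transfer_nonneg L hL i, 1, Subgroup.mem_bot.2 rfl, fun e c => ?_⟩
  unfold transfer
  simp only [← h, EmbeddingLike.apply_eq_iff_eq]
  by_cases hec : e = c
  · rw [if_pos hec, if_pos (show (1 : Equiv.Perm (Fin m)) e = c from hec)]
    simp
  · rw [if_neg hec]
    split_ifs <;> simp

lemma exists_full_row (i : ℕ) (h : L i ≠ L (i + 1)) :
    ∃ e₀, ∀ c, transfer L hL i e₀ c = 1 := by
  have : ¬ L i ⊆ L (i + 1) := fun hs =>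
    h (Finset.eq_of_subset_of_card_le hs (by rw [hL, hL]))
  obtain ⟨x, hx, hx'⟩ := Finset.not_subset.1 this
  have hr : x ∈ Set.range ((L i).orderEmbOfFin (hL i)) := by
    rw [Finset.range_orderEmbOfFin]
    exact hx
  obtain ⟨e₀, rfl⟩ := hr
  refine ⟨e₀, fun c => ?_⟩
  unfold transfer
  rw [if_neg]
  intro h'
  rw [h'] at hx'
  exact hx' (Finset.orderEmbOfFin_mem _ _ _)

lemma const_of_forall (n : ℕ) (h : ∀ i < n, L i = L (i + 1)) : ∀ i ≤ n, L i = L 0 := by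
  intro i hi
  induction i with
  | zero => rfl
  | succ i ih => rw [← h i hi, ih (by omega)]

/-- Around a closed sequence of lists the number of changes is not one. -/
lemma exists_second_change (n i : ℕ) (hi : i < n) (hn : L n = L 0) (h : L i ≠ L (i + 1)) :
    ∃ j < n, j ≠ i ∧ L j ≠ L (j + 1) := by
  by_contra! hc
  have h0 : L i = L 0 := const_of_forall L i (fun j hj => hc j (by omega) (by omega)) i le_rfl
  have h1 : L (i + 1 + (n - (i + 1))) = L (i + 1 + 0) :=
    const_of_forall (fun j => L (i + 1 + j)) (n - (i + 1))
      (fun j hj => hc (i + 1 + j) (by omega) (by omega)) _ le_rfl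
  rw [show i + 1 + (n - (i + 1)) = n by omega, hn, ← h0] at h1
  exact h h1

lemma trace_transfer_lower (k : ℕ) (hk : 1 ≤ k) (hm : 2 ≤ m) (hn : L (2 * k) = L 0) :
    ((m : ℤ) - 1) ^ (2 * k) + (m - 1) ≤
      (((List.range (2 * k)).map (transfer L hL)).prod).trace := by
  by_cases hall : ∀ i < 2 * k, L i = L (i + 1)
  · obtain ⟨σ, hσ, hZ⟩ := run_lower hm ⊥ ((List.range (2 * k)).map (transfer L hL)) (by
      intro M hM
      obtain ⟨i, hi, rfl⟩ := List.mem_map.1 hM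
      exact transfer_isTransfer_bot L hL i (hall i (List.mem_range.1 hi)))
    rw [Subgroup.mem_bot] at hσ
    subst hσ
    simp only [List.length_map, List.length_range] at hZ
    have hs : (-1 : ℤ) ^ (2 * k) = 1 := by simp [pow_mul]
    have hb := mul_offDiag (m : ℤ) (2 * k)
    rw [hs] at hZ hb
    calc ((m : ℤ) - 1) ^ (2 * k) + (m - 1) = ∑ _a : Fin m, (offDiag m (2 * k) + 1) := by
          simp
          linear_combination -hb
      _ ≤ _ := Finset.sum_le_sum fun a _ => by simpa using hZ a a
  push Not at hall
  obtain ⟨i, hi, hne⟩ := hall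
  rcases Nat.lt_or_ge k 2 with hk2 | hk2
  · obtain rfl : k = 1 := by omega
    have hT : ∀ c a, transfer L hL 1 c a = transfer L hL 0 a c := by
      intro c a
      unfold transfer
      have hn' : L (1 + 1) = L 0 := hn
      simp only [hn', zero_add]
      exact if_congr eq_comm rfl rfl
    have hsq : ∀ a c, transfer L hL 0 a c * transfer L hL 0 a c = transfer L hL 0 a c := by
      intro a c
      unfold transfer
      split_ifs <;> simp
    have h2 : (List.range (2 * 1)) = [0, 1] := rfl
    rw [h2]
    simp only [List.map_cons, List.map_nil, List.prod_cons, List.prod_nil, mul_one,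
      Matrix.trace, Matrix.diag, Matrix.mul_apply, hT, hsq]
    calc ((m : ℤ) - 1) ^ 2 + (m - 1) = ∑ _a : Fin m, ((m : ℤ) - 1) := by
          simp
          ring
      _ ≤ _ := Finset.sum_le_sum fun a _ => (transfer_isTransfer L hL 0).row_sum a
  -- Rotate the cycle so that the pair of distinct lists comes last.
  obtain ⟨s, t, hst⟩ := List.append_of_mem (List.mem_range.2 hi)
  have hlen : (t ++ s).length + 1 = 2 * k := by
    have := congrArg List.length hst
    simp at this ⊢
    omega
  have htr : (((List.range (2 * k)).map (transfer L hL)).prod).trace =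
      (((t ++ s).map (transfer L hL)).prod * transfer L hL i).trace := by
    rw [hst]
    simp only [List.map_append, List.map_cons, List.prod_append, List.prod_cons]
    rw [← mul_assoc, Matrix.trace_mul_comm, mul_assoc]
  rw [htr]
  have hl : ∀ M ∈ (t ++ s).map (transfer L hL), IsTransfer ⊤ M := by
    intro M hM
    obtain ⟨j, -, rfl⟩ := List.mem_map.1 hM
    exact transfer_isTransfer L hL j
  obtain ⟨e₀, he₀⟩ := exists_full_row L hL i hne
  rcases Nat.lt_or_ge m 3 with hm3 | hm3
  · obtain rfl : m = 2 := by omega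
    obtain ⟨j, hj, hji, hjne⟩ := exists_second_change L (2 * k) i hi hn hne
    have hjmem : j ∈ t ++ s := by
      have := List.mem_range.2 hj
      rw [hst] at this
      simp only [List.mem_append, List.mem_cons] at this ⊢
      tauto
    obtain ⟨e₁, he₁⟩ := exists_full_row L hL j hjne
    have hl' : ∀ M ∈ (t ++ s).map (transfer L hL), HasPerm M :=
      fun M hM => hasPerm_of_isTransfer (hl M hM)
    have := trace_lower_two (hasPerm_prod _ hl').1 (transfer_nonneg L hL i)
      (almostPos_prod _ hl' _ (List.mem_map_of_mem hjmem)
        (almostPos_of_isTransfer (transfer_isTransfer L hL j) e₁ he₁))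
      (almostPos_of_isTransfer (transfer_isTransfer L hL i) e₀ he₀)
    simpa using this
  · have := trace_lower_of_three_le hm3 (k - 2) ((t ++ s).map (transfer L hL)) hl
      (by rw [List.length_map]; omega) _ (transfer_isTransfer L hL i) (transfer_le_one L hL i)
      e₀ he₀
    rwa [show 2 * (k - 2) + 4 = 2 * k by omega] at this

/-! ### Counting colorings by matrix products -/

/-- The proper colorings counted by `pathCount`, as a finset. -/
def pathSet (n : ℕ) (c d : ℕ) : Finset (Fin (n + 1) → ℕ) :=
  (Fintype.piFinset fun v : Fin (n + 1) => L v).filter fun f =>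
    (∀ i : Fin n, f i.castSucc ≠ f i.succ) ∧ f 0 = c ∧ f (Fin.last n) = d

lemma mem_pathSet (n c d : ℕ) (f : Fin (n + 1) → ℕ) :
    f ∈ pathSet L n c d ↔ (∀ v : Fin (n + 1), f v ∈ L v) ∧
      (∀ i : Fin n, f i.castSucc ≠ f i.succ) ∧ f 0 = c ∧ f (Fin.last n) = d := by
  simp [pathSet]

lemma pathCount_eq_card (n : ℕ) (c d : ℕ) :
    pathCount n (fun v => L v) c d = (pathSet L n c d).card :=
  Nat.subtype_card _ (mem_pathSet L n c d)

/-- Removing the last vertex of the path; only the inequality is needed. -/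
lemma sum_card_le (n c d : ℕ) (hd : d ∈ L (n + 1)) (s : Finset ℕ) (hs : ∀ e ∈ s, e ≠ d) :
    ∑ e ∈ s, (pathSet L n c e).card ≤ (pathSet L (n + 1) c d).card := by
  rw [← Finset.card_sigma]
  refine Finset.card_le_card_of_injOn
    (fun x => (Fin.snoc x.2 d : Fin (n + 2) → ℕ)) ?_ ?_
  · rintro ⟨e, f⟩ hx
    simp only [Finset.coe_sigma, Set.mem_sigma_iff, Finset.mem_coe, mem_pathSet] at hx
    obtain ⟨he, hf, hadj, h0, hlast⟩ := hx
    simp only [Finset.mem_coe, mem_pathSet]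
    refine ⟨fun v => ?_, fun i => ?_, ?_, by simp⟩
    · refine Fin.lastCases ?_ (fun v => ?_) v
      · simpa using hd
      · simpa using hf v
    · refine Fin.lastCases ?_ (fun i => ?_) i
      · rw [Fin.snoc_castSucc, Fin.succ_last, Fin.snoc_last, hlast]
        exact hs e he
      · rw [Fin.snoc_castSucc, Fin.succ_castSucc, Fin.snoc_castSucc]
        exact hadj i
    · rw [← Fin.castSucc_zero, Fin.snoc_castSucc, h0]
  · rintro ⟨e, f⟩ hx ⟨e', f'⟩ hx' h
    simp only [Finset.coe_sigma, Set.mem_sigma_iff, Finset.mem_coe, mem_pathSet] at hx hx'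
    have hff : f = f' := by
      have := congrArg Fin.init h
      simpa using this
    subst hff
    obtain rfl : e = e' := hx.2.2.2.2.symm.trans hx'.2.2.2.2
    rfl

lemma prod_transfer_le (n : ℕ) (a b : Fin m) :
    ((List.range n).map (transfer L hL)).prod a b ≤
      (pathSet L n ((L 0).orderEmbOfFin (hL 0) a) ((L n).orderEmbOfFin (hL n) b)).card := by
  induction n generalizing b with
  | zero =>
    simp only [List.range_zero, List.map_nil, List.prod_nil, Matrix.one_apply]
    split_ifs with h
    · subst h
      norm_cast
      refine Finset.card_pos.2 ⟨fun _ => (L 0).orderEmbOfFin (hL 0) a, ?_⟩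
      rw [mem_pathSet]
      refine ⟨fun v => ?_, fun i => i.elim0, rfl, rfl⟩
      obtain rfl : v = 0 := Fin.ext (by omega)
      exact Finset.orderEmbOfFin_mem _ _ _
    · positivity
  | succ n ih =>
    rw [List.range_succ, List.map_append, List.prod_append, List.map_singleton,
      List.prod_singleton, Matrix.mul_apply]
    set d := (L (n + 1)).orderEmbOfFin (hL (n + 1)) b with hd
    have h1 := sum_card_le L n ((L 0).orderEmbOfFin (hL 0) a) d (Finset.orderEmbOfFin_mem _ _ _)
      ((Finset.univ.filter fun e => (L n).orderEmbOfFin (hL n) e ≠ d).map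
        ((L n).orderEmbOfFin (hL n)).toEmbedding) (by simp)
    rw [Finset.sum_map, Finset.sum_filter] at h1
    refine le_trans (Finset.sum_le_sum fun e _ =>
      mul_le_mul_of_nonneg_right (ih e) (transfer_nonneg L hL n e b)) (le_trans (le_of_eq ?_)
        (Nat.cast_le.2 h1))
    push_cast
    refine Finset.sum_congr rfl fun e _ => ?_
    unfold transfer
    rw [← hd]
    by_cases h : (L n).orderEmbOfFin (hL n) e = d <;> simp [h]

end Lists

/-- Let `P = u, w₁, …, w_{2k-1}, v` be a path on `2k+1` vertices (`k ≥ 1`) and `L` an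
`m`-assignment for `P` with `L(u) = L(v) = {1,…,m}`.  With `N(c,d)` the number of proper
`L`-colorings of `P` coloring `u` with `c` and `v` with `d`:
`Σ_{j=1}^m N(j,j) ≥ (m-1)^{2k} + (m-1)`. -/
theorem path_even_sum_diagonal (k m : ℕ) (hk : 1 ≤ k)
    (L : Fin (2*k+1) → Finset ℕ) (hL : ∀ v, (L v).card = m)
    (hu : L 0 = Finset.Icc 1 m) (hv : L (Fin.last (2*k)) = Finset.Icc 1 m) :
    (m - 1)^(2*k) + (m - 1) ≤ ∑ j ∈ Finset.Icc 1 m, pathCount (2*k) L j j := by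
  rcases Nat.lt_or_ge m 2 with hm | hm
  · -- For `m ≤ 1` truncated subtraction makes the left side `0 ^ (2k) + 0 = 0`.
    have h0 : m - 1 = 0 := by omega
    rw [h0, zero_pow (by omega)]
    exact Nat.zero_le _
  -- The lists as an infinite sequence; the values beyond the path are irrelevant.
  let L' : ℕ → Finset ℕ := fun i => if h : i < 2 * k + 1 then L ⟨i, h⟩ else Finset.Icc 1 m
  have hL' : ∀ i, (L' i).card = m := by
    intro i
    simp only [L']
    split_ifs
    · exact hL _
    · simp
  have hLL : L = fun v : Fin (2 * k + 1) => L' v := by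
    funext v
    simp only [L']
    rw [dif_pos v.isLt]
  have h0 : L' 0 = Finset.Icc 1 m := by
    rw [← hu, hLL]
    rfl
  have hn : L' (2 * k) = Finset.Icc 1 m := by
    rw [← hv, hLL]
    rfl
  have hends : L' (2 * k) = L' 0 := hn.trans h0.symm
  have key := trace_transfer_lower L' hL' k hk hm hends
  have hmap : Finset.univ.map ((L' 0).orderEmbOfFin (hL' 0)).toEmbedding = Finset.Icc 1 m := by
    rw [Finset.map_orderEmbOfFin_univ, h0]
  rw [← hmap, Finset.sum_map, hLL]
  have hcast : ((m - 1 : ℕ) : ℤ) = m - 1 := by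
    push_cast [Nat.cast_sub (show 1 ≤ m by omega)]
    rfl
  zify
  rw [hcast]
  refine key.trans (Finset.sum_le_sum fun a _ => ?_)
  have h := prod_transfer_le L' hL' (2 * k) a a
  simp only [hends] at h
  rw [pathCount_eq_card]
  exact h
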